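/- Let K be a field of characteristic p ≥ 0 that is finitely generated over its prime subfield. Then for all but finitely many primes ℓ, the group Hom_{G_K}(μ_{ℓ^n}, ℤ/ℓ^n ℤ) of G_K-equivariant group homomorphisms from μ_{ℓ^n} to ℤ/ℓ^n ℤ vanishes for every n ≥ 1. That is, the set of primes ℓ ≠ p for which there exist some n ≥ 1 and some nonzero G_K-equivariant homomorphism μ_{ℓ^n} → ℤ/ℓ^n ℤ is finite. -/

import Mathlib

/-!
Let `f : μ_{ℓ^n} → A` be equivariant and nontrivial. Its kernel is a proper subgroup of the cyclic
`ℓ`-group `μ_{ℓ^n}`, so by Lagrange it is killed by `ℓ^k` when `μ_{ℓ^n}` has order `ℓ^{k+1}`. Since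
`σζ / ζ` lies in the kernel, `σ` fixes `ζ^{ℓ^k}`; if `ζ` is a generator this is a primitive `ℓ`-th
root of unity, which therefore lies in `K`.

A finitely generated field `K` contains only finitely many roots of unity. Indeed, let `F` be the
prime field, `E` the algebraic closure of `F` in `K`, and `x` a transcendence basis of `K/F`. As `x`
stays algebraically independent over `E`, the fields `E` and `F(x)` are linearly disjoint over `F`,
so `[E : F] ≤ [K : F(x)] < ∞`, and `E`, which contains all roots of unity of `K`, is a finite field
or a number field.
-/

section FiniteGroups

variable {G M : Type*} {ℓ k : ℕ}

theorem pow_prime_pow_eq_one_of_mem_of_ne_top [Group G] (hℓ : ℓ.Prime)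
    (hG : Nat.card G = ℓ ^ (k + 1)) {H : Subgroup G} (hH : H ≠ ⊤) {x : G} (hx : x ∈ H) :
    x ^ ℓ ^ k = 1 := by
  have : Finite G := Nat.finite_of_card_ne_zero (hG ▸ pow_ne_zero _ hℓ.ne_zero)
  obtain ⟨j, hj, hcard⟩ := (Nat.dvd_prime_pow hℓ).1 (hG ▸ H.card_subgroup_dvd_card)
  have hjk : j ≠ k + 1 := fun h ↦ hH (H.eq_top_of_card_eq (by rw [hcard, hG, h]))
  refine orderOf_dvd_iff_pow_eq_one.1 ((Subgroup.orderOf_dvd_natCard H hx).trans ?_)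
  exact hcard ▸ pow_dvd_pow ℓ (by lia)

theorem pow_prime_pow_eq_of_map_eq [CommGroup G] [MulOneClass M] (hℓ : ℓ.Prime)
    (hG : Nat.card G = ℓ ^ (k + 1)) {f : G →* M} (hf : f ≠ 1) {x y : G} (hxy : f x = f y) :
    x ^ ℓ ^ k = y ^ ℓ ^ k := by
  have hker : f.ker ≠ ⊤ := fun h ↦ hf (MonoidHom.ker_eq_top_iff.1 h)
  rw [← div_eq_one, ← div_pow]
  exact pow_prime_pow_eq_one_of_mem_of_ne_top hℓ hG hker (f.div_mem_ker_iff.2 hxy)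

end FiniteGroups

theorem exists_natCard_rootsOfUnity_eq_prime_pow (R : Type*) [CommRing R] [IsDomain R] {ℓ : ℕ}
    (hℓ : ℓ.Prime) (n : ℕ) : ∃ j, Nat.card (rootsOfUnity (ℓ ^ n) R) = ℓ ^ j := by
  have : Fact ℓ.Prime := ⟨hℓ⟩
  have hp : IsPGroup ℓ (rootsOfUnity (ℓ ^ n) R) :=
    fun ζ ↦ ⟨n, Subtype.ext ((mem_rootsOfUnity _ _).1 ζ.2)⟩
  exact IsPGroup.iff_card.1 hp

section Descent

variable {K L : Type*} [Field K] [Field L] [Algebra K L] [IsGalois K L]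

theorem exists_isPrimitiveRoot_of_fixed {ω : L} {m : ℕ} (hω : IsPrimitiveRoot ω m)
    (hfix : ∀ σ : L ≃ₐ[K] L, σ ω = ω) : ∃ w : K, IsPrimitiveRoot w m := by
  obtain ⟨w, rfl⟩ := (InfiniteGalois.mem_range_algebraMap_iff_fixed ω).2 hfix
  exact ⟨w, hω.of_map_of_injective (algebraMap K L).injective⟩

theorem exists_isPrimitiveRoot_of_equivariant_hom_ne_one {A : Type*} [MulOneClass A] {ℓ n : ℕ}
    (hℓ : ℓ.Prime) {f : rootsOfUnity (ℓ ^ n) L →* A}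
    (hequiv : ∀ (σ : L ≃ₐ[K] L) (ζ : rootsOfUnity (ℓ ^ n) L),
      f (restrictRootsOfUnity σ (ℓ ^ n) ζ) = f ζ)
    (hf : f ≠ 1) : ∃ ω : K, IsPrimitiveRoot ω ℓ := by
  have : NeZero ℓ := ⟨hℓ.ne_zero⟩
  obtain ⟨j, hcard⟩ := exists_natCard_rootsOfUnity_eq_prime_pow L hℓ n
  obtain ⟨k, rfl⟩ : ∃ k, j = k + 1 := by
    refine Nat.exists_eq_succ_of_ne_zero fun hj ↦ hf ?_
    have := (Nat.card_eq_one_iff_unique.1 (by rw [hcard, hj, pow_zero])).1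
    exact Subsingleton.elim _ _
  obtain ⟨ζ, hζ⟩ := IsCyclic.exists_ofOrder_eq_natCard (α := rootsOfUnity (ℓ ^ n) L)
  have hprim : IsPrimitiveRoot ((ζ : Lˣ) : L) (ℓ ^ (k + 1)) := by
    rw [IsPrimitiveRoot.coe_units_iff, IsPrimitiveRoot.coe_submonoidClass_iff, ← hcard, ← hζ]
    exact IsPrimitiveRoot.orderOf ζ
  refine exists_isPrimitiveRoot_of_fixed
    (hprim.pow (pow_pos hℓ.pos _) (pow_succ ℓ k)) fun σ ↦ ?_
  have hfixed := pow_prime_pow_eq_of_map_eq hℓ hcard hf (hequiv σ ζ)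
  simpa using congrArg (fun u : rootsOfUnity (ℓ ^ n) L ↦ ((u : Lˣ) : L)) hfixed

end Descent

section AlgebraicClosure

theorem linearDisjoint_adjoin_range_of_algebraicIndependent {R S ι : Type*} [CommRing R]
    [CommRing S] [Algebra R S] {A : Subalgebra R S} {x : ι → S} (hx : AlgebraicIndependent R x)
    (hxA : AlgebraicIndependent A x) : A.LinearDisjoint (Algebra.adjoin R (Set.range x)) := by
  have hmonomials : LinearIndependent A
      (MvPolynomial.aeval (R := A) x ∘ MvPolynomial.basisMonomials ι A) :=
    (MvPolynomial.basisMonomials ι A).linearIndependent.map_injOn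
      (MvPolynomial.aeval (R := A) x).toLinearMap hxA.injOn
  refine .of_basis_right _ _ ((MvPolynomial.basisMonomials ι R).map hx.aevalEquiv.toLinearEquiv) ?_
  convert hmonomials using 1
  ext s
  simp [MvPolynomial.aeval_monomial]

open scoped IntermediateField.algebraAdjoinAdjoin in
theorem finiteDimensional_algebraicClosure_of_essFiniteType (F K : Type*) [Field F] [Field K]
    [Algebra F K] [Algebra.EssFiniteType F K] : FiniteDimensional F (algebraicClosure F K) := by
  obtain ⟨s, hs⟩ := exists_isTranscendenceBasis F K
  set x : s → K := Subtype.val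
  have : Algebra.IsAlgebraic (IntermediateField.adjoin F (Set.range x)) K := hs.isAlgebraic_field
  have : Algebra.EssFiniteType (IntermediateField.adjoin F (Set.range x)) K :=
    .of_comp F _ K
  have : FiniteDimensional (IntermediateField.adjoin F (Set.range x)) K :=
    Algebra.finite_of_essFiniteType_of_isAlgebraic
  have hdisj : (algebraicClosure F K).toSubalgebra.LinearDisjoint
      (Algebra.adjoin F (Set.range x)) :=
    linearDisjoint_adjoin_range_of_algebraicIndependent hs.1 hs.1.algebraicClosure
  let b := Module.Basis.ofVectorSpace F (algebraicClosure F K)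
  have hb := hdisj.linearIndependent_left_of_flat b.linearIndependent
  rw [LinearIndependent.iff_fractionRing (Algebra.adjoin F (Set.range x))
    (IntermediateField.adjoin F (Set.range x))] at hb
  have := hb.finite
  exact Module.Finite.of_basis b

end AlgebraicClosure

section RootsOfUnity

theorem isIntegral_of_isOfFinOrder (R : Type*) {A : Type*} [CommRing R] [Ring A] [Algebra R A]
    {x : A} (hx : IsOfFinOrder x) : IsIntegral R x := by
  obtain ⟨n, hn, hxn⟩ := isOfFinOrder_iff_pow_eq_one.1 hx
  exact .of_pow hn (hxn ▸ isIntegral_one)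

theorem finite_setOf_isOfFinOrder_of_numberField (E : Type*) [Field E] [NumberField E] :
    {x : E | IsOfFinOrder x}.Finite := by
  refine (NumberField.Embeddings.finite_of_norm_le E ℂ 1).subset fun x hx ↦ ?_
  exact ⟨isIntegral_of_isOfFinOrder ℤ hx, fun φ ↦ ((φ : E →* ℂ).isOfFinOrder hx).norm_eq_one.le⟩

theorem finite_setOf_isOfFinOrder_of_algebraicClosure (F : Type*) {K : Type*} [Field F] [Field K]
    [Algebra F K] (h : {x : algebraicClosure F K | IsOfFinOrder x}.Finite) :
    {x : K | IsOfFinOrder x}.Finite := by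
  refine (h.image (algebraMap (algebraicClosure F K) K)).subset fun x hx ↦ ?_
  have halg : IsAlgebraic F x := (isIntegral_of_isOfFinOrder F hx).isAlgebraic
  exact ⟨⟨x, mem_algebraicClosure_iff.2 halg⟩, Submonoid.isOfFinOrder_coe.1 hx, rfl⟩

theorem essFiniteType_of_field_fg (F K : Type*) [Field F] [Field K] [Algebra F K] [Field.FG K] :
    Algebra.EssFiniteType F K := by
  obtain ⟨S, hS⟩ := Field.FG.finitely_generated (L := K)
  have hle : Subfield.closure (S : Set K) ≤
      (IntermediateField.adjoin F (S : Set K)).toSubfield :=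
    Subfield.closure_le.2 (IntermediateField.subset_adjoin F (S : Set K))
  refine IntermediateField.fg_top_iff.1 ⟨S, top_unique fun y _ ↦ hle ?_⟩
  rw [hS]
  exact Subfield.mem_top y

theorem finite_setOf_isOfFinOrder_of_field_fg (K : Type*) [Field K] [Field.FG K] :
    {x : K | IsOfFinOrder x}.Finite := by
  obtain ⟨p, _⟩ := CharP.exists K
  rcases CharP.char_is_prime_or_zero K p with hp | rfl
  · have : Fact p.Prime := ⟨hp⟩
    let := ZMod.algebra K p
    have := essFiniteType_of_field_fg (ZMod p) K
    have := finiteDimensional_algebraicClosure_of_essFiniteType (ZMod p) K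
    have : Finite (algebraicClosure (ZMod p) K) := Module.finite_of_finite (ZMod p)
    exact finite_setOf_isOfFinOrder_of_algebraicClosure (ZMod p) (Set.toFinite _)
  · have : CharZero K := CharP.charP_to_charZero K
    have := essFiniteType_of_field_fg ℚ K
    have := finiteDimensional_algebraicClosure_of_essFiniteType ℚ K
    have : NumberField (algebraicClosure ℚ K) := { }
    exact finite_setOf_isOfFinOrder_of_algebraicClosure ℚ
      (finite_setOf_isOfFinOrder_of_numberField _)

end RootsOfUnity

theorem equivariant_hom_rootsOfUnity_vanishes_for_almost_all_primes_general
    (K L : Type*) [Field K] [Field.FG K] [Field L] [Algebra K L] [IsGalois K L] :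
    {ℓ : ℕ | ℓ.Prime ∧ ∃ (n : ℕ) (A : Type*) (_ : MulOneClass A)
      (f : rootsOfUnity (ℓ ^ n) L →* A),
        (∀ (σ : L ≃ₐ[K] L) (ζ : rootsOfUnity (ℓ ^ n) L),
          f (restrictRootsOfUnity σ (ℓ ^ n) ζ) = f ζ) ∧ f ≠ 1}.Finite := by
  refine ((finite_setOf_isOfFinOrder_of_field_fg K).image orderOf).subset ?_
  rintro ℓ ⟨hℓ, n, A, _, f, hequiv, hf⟩
  obtain ⟨ω, hω⟩ := exists_isPrimitiveRoot_of_equivariant_hom_ne_one hℓ hequiv hf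
  exact ⟨ω, hω.isOfFinOrder hℓ.ne_zero, hω.eq_orderOf.symm⟩

/-- Let `K` be a field of characteristic `p ≥ 0` that is finitely generated
over its prime subfield.  Then the set of primes `ℓ ≠ p` for which there exist some `n ≥ 1` and
some nonzero Galois-equivariant homomorphism `μ_{ℓ^n} → ℤ/ℓ^n ℤ` is finite; i.e. for all but
finitely many primes `ℓ`, the group `Hom_{G_K}(μ_{ℓ^n}, ℤ/ℓ^n ℤ)` vanishes for every `n ≥ 1`. -/
theorem equivariant_hom_rootsOfUnity_vanishes_for_almost_all_primes
    (K : Type*) [Field K] (hfg : ∃ S : Finset K, Subfield.closure (S : Set K) = ⊤)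
    (p : ℕ) [CharP K p] :
    {ℓ : ℕ | ℓ.Prime ∧ ℓ ≠ p ∧ ∃ n : ℕ, 1 ≤ n ∧
      ∃ f : rootsOfUnity (ℓ ^ n) (SeparableClosure K) →*
          Multiplicative (ZMod (ℓ ^ n)),
        (∀ (σ : SeparableClosure K ≃ₐ[K] SeparableClosure K)
            (ζ : rootsOfUnity (ℓ ^ n) (SeparableClosure K)),
            f (restrictRootsOfUnity σ (ℓ ^ n) ζ) = f ζ) ∧ f ≠ 1}.Finite := by
  have : Field.FG K := ⟨hfg⟩
  exact (equivariant_hom_rootsOfUnity_vanishes_for_almost_all_primes_general K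
    (SeparableClosure K)).subset fun ℓ ⟨hℓ, _, n, _, f, hf⟩ ↦ ⟨hℓ, n, _, _, f, hf⟩
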